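/- Let S = {s_1,…,s_K} be a protocol sequence set, let γ satisfy 1 ≤ γ < K, and let M satisfy 2 ≤ M < K. Set A = {1,…,M}. Suppose S is TI with MPR capability γ, every subfamily of S consisting of M−1 sequences is SI, and all K sequences have the same duty factor f ∈ ℚ. Then for any two systems of shifts τ = (τ_1,…,τ_M), τ′ = (τ′_1,…,τ′_M) on A, δ_M(τ→τ′; A) · Σ_{i=1}^{M−1} (−1)^{M−i} · binom(M−2, i−1) · binom(K−M, γ−i) · f^{γ−i} · (1−f)^{K−M−γ+i} = 0, where the terms with γ − i < 0 or γ − i > K − M are understood to be zero. -/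

import Mathlib

open Finset

/-- Generalized Hamming cross-correlation of the sequences indexed by `A`
(only the shifts `τ j` with `j ∈ A` matter). -/
def Hcorr {K L : ℕ} [NeZero L] (s : Fin K → ZMod L → ℕ)
    (A : Finset (Fin K)) (τ : Fin K → ZMod L) : ℕ :=
  ∑ t : ZMod L, ∏ j ∈ A, s j (t + τ j)

/-- The family `s` is shift-invariant (SI): every generalized Hamming
cross-correlation is independent of the relative shifts. -/
def IsSI {K L : ℕ} [NeZero L] (s : Fin K → ZMod L → ℕ) : Prop :=
  ∀ A : Finset (Fin K), A.Nonempty →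
    ∀ τ τ' : Fin K → ZMod L, Hcorr s A τ = Hcorr s A τ'

/-- Number of slots `t` in one period where user `i` transmits and at most
`γ - 1` other users transmit. -/
def Rcount {K L : ℕ} [NeZero L] (s : Fin K → ZMod L → ℕ) (γ : ℕ)
    (i : Fin K) (τ : Fin K → ZMod L) : ℕ :=
  (Finset.univ.filter (fun t : ZMod L =>
    s i (t + τ i) = 1 ∧ ∑ j ∈ Finset.univ.erase i, s j (t + τ j) ≤ γ - 1)).card

/-- Throughput of user `i` under MPR capability `γ` at shifts `τ`. -/
def R {K L : ℕ} [NeZero L] (s : Fin K → ZMod L → ℕ) (γ : ℕ)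
    (i : Fin K) (τ : Fin K → ZMod L) : ℚ :=
  (Rcount s γ i τ : ℚ) / L

/-- The family `s` is throughput-invariant (TI) with MPR capability `γ`. -/
def IsTI {K L : ℕ} [NeZero L] (s : Fin K → ZMod L → ℕ) (γ : ℕ) : Prop :=
  ∀ i : Fin K, ∀ τ τ' : Fin K → ZMod L, R s γ i τ = R s γ i τ'

/-- Duty factor of a single sequence. -/
def duty {L : ℕ} [NeZero L] (s : ZMod L → ℕ) : ℚ :=
  (∑ t : ZMod L, (s t : ℚ)) / L

/-- `thetaZ s A m τ` counts the `t ∈ ZMod L` such that exactly `m` of the values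
`s j (t + τ j)`, `j ∈ A`, equal `1` (zero when `m < 0` or `m > |A|`). -/
def thetaZ {K L : ℕ} [NeZero L] (s : Fin K → ZMod L → ℕ)
    (A : Finset (Fin K)) (m : ℤ) (τ : Fin K → ZMod L) : ℕ :=
  (Finset.univ.filter (fun t : ZMod L =>
    ((A.filter (fun j => s j (t + τ j) = 1)).card : ℤ) = m)).card

/-! Mark each slot in which user `i` transmits by `X ^ k`, where `k` is the number of other active
users, and sum over the slots: the throughput of `i` is proportional to the sum of the first `γ`
coefficients of the resulting polynomial. An interfering binary user `j` contributes the factor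
`X ^ s j = 1 + s j * (X - 1)` to a slot. Averaging over the shifts of the users outside `A` turns
their factors into the constants `1 + f * (X - 1)`, while expanding the product over `A` expresses
the average through the cross-correlations of the subsets of `A` containing `i`. All of these but
the one of `A` itself, which is `θ_M`, are shift-invariant, so throughput invariance forces `δ_M`
times the sum of the first `γ` coefficients of `(X - 1) ^ (M - 1) * (1 + f * (X - 1)) ^ (K - M)` to
vanish. -/

section

open Polynomial

section CoeffSum

/-- The sum of the first `n` coefficients of a polynomial, as a linear form; it reads off the
throughput of a user from its load polynomial. -/
noncomputable def coeffSum (S : Type*) [Semiring S] (n : ℕ) : S[X] →ₗ[S] S :=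
  ∑ k ∈ range n, lcoeff S k

variable {S : Type*}

lemma coeffSum_apply [Semiring S] (n : ℕ) (p : S[X]) :
    coeffSum S n p = ∑ k ∈ range n, p.coeff k := by
  simp [coeffSum]

lemma coeffSum_C_mul_X_pow [Semiring S] (n m : ℕ) (a : S) :
    coeffSum S n (C a * X ^ m) = if m < n then a else 0 := by
  simp [coeffSum_apply, coeff_C_mul, coeff_X_pow]

lemma coeffSum_succ_X_sub_one_mul [Ring S] (n : ℕ) (p : S[X]) :
    coeffSum S (n + 1) ((X - 1) * p) = -p.coeff n := by
  simp only [coeffSum_apply, sub_mul, one_mul, coeff_sub, sum_sub_distrib]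
  rw [sum_range_succ', sum_range_succ _ n]
  simp [coeff_X_mul]

lemma coeff_mul_eq_sum_range [Semiring S] {p : S[X]} {n : ℕ} (hp : p.natDegree < n) (q : S[X])
    (c : ℕ) :
    (p * q).coeff c = ∑ i ∈ range n, if i ≤ c then p.coeff i * q.coeff (c - i) else 0 := by
  conv_lhs => rw [p.as_sum_range_C_mul_X_pow' hp]
  simp [sum_mul, mul_assoc, coeff_X_pow_mul']

lemma coeff_one_add_C_mul_X_sub_one_pow [CommRing S] (f : S) (N k : ℕ) :
    ((1 + C f * (X - 1)) ^ N).coeff k = N.choose k * f ^ k * (1 - f) ^ (N - k) := by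
  have h : (1 + C f * (X - 1)) ^ N = ((X + C (1 - f)) ^ N).comp (C f * X) := by
    rw [pow_comp, add_comp, X_comp, C_comp, C_sub, C_1]
    ring
  rw [h, comp_C_mul_X_coeff, coeff_X_add_C_pow]
  ring

lemma coeff_X_sub_one_pow_mul_pow [CommRing S] (f : S) (m N c : ℕ) :
    ((X - 1) ^ m * (1 + C f * (X - 1)) ^ N).coeff c =
      ∑ i ∈ range (m + 1), if i ≤ c then
        (-1) ^ (m - i) * (m.choose i : S) * (N.choose (c - i) : S) *
          f ^ (c - i) * (1 - f) ^ (N - (c - i)) else 0 := by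
  have hX : (X - 1 : S[X]) = X + C (-1) := by rw [C_neg, C_1, sub_eq_add_neg]
  have hdeg : ((X - 1 : S[X]) ^ m).natDegree < m + 1 := by
    rw [← C_1, Nat.lt_succ_iff]
    exact (natDegree_pow_le_of_le m (natDegree_X_sub_C_le 1)).trans_eq (mul_one m)
  have hcoeff (i : ℕ) : ((X - 1 : S[X]) ^ m).coeff i = (-1) ^ (m - i) * m.choose i := by
    rw [hX, coeff_X_add_C_pow]
  simp only [coeff_mul_eq_sum_range hdeg, hcoeff, coeff_one_add_C_mul_X_sub_one_pow, mul_assoc]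

lemma coeffSum_X_sub_one_pow_mul_pow [CommRing S] (f : S) {M γ : ℕ} (hM : 2 ≤ M) (hγ : 1 ≤ γ)
    (N : ℕ) :
    coeffSum S γ ((X - 1) ^ (M - 1) * (1 + C f * (X - 1)) ^ N) =
      ∑ i ∈ Icc 1 (M - 1), if i ≤ γ then
        (-1) ^ (M - i) * ((M - 2).choose (i - 1) : S) * (N.choose (γ - i) : S) *
          f ^ (γ - i) * (1 - f) ^ (N - (γ - i)) else 0 := by
  obtain ⟨m, rfl⟩ := Nat.exists_eq_add_of_le' hM
  obtain ⟨c, rfl⟩ := Nat.exists_eq_add_of_le' hγ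
  rw [show m + 2 - 1 = m + 1 from rfl, pow_succ', mul_assoc, coeffSum_succ_X_sub_one_mul,
    coeff_X_sub_one_pow_mul_pow, ← sum_neg_distrib, range_eq_Ico,
    ← Ico_add_one_right_eq_Icc, ← sum_Ico_add' _ 0 (m + 1) 1]
  refine sum_congr rfl fun i hi => ?_
  have hsign : m + 2 - (i + 1) = m - i + 1 := by have := mem_Ico.1 hi; omega
  simp only [hsign, pow_succ, add_le_add_iff_right, Nat.add_sub_add_right, Nat.add_sub_cancel]
  split_ifs <;> simp

end CoeffSum

section Averaging

variable {ι G : Type*} [Fintype ι] [DecidableEq ι] [Fintype G]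

/-- The systems of shifts that agree with `τ` on `A`; averaging over them removes the dependence on
the shifts of the users outside `A`. -/
def shiftsExtending (A : Finset ι) (τ : ι → G) : Finset (ι → G) :=
  Fintype.piFinset fun j => if j ∈ A then {τ j} else univ

lemma card_shiftsExtending (A : Finset ι) (τ : ι → G) :
    #(shiftsExtending A τ) = Fintype.card G ^ #Aᶜ := by
  rw [shiftsExtending, Fintype.card_piFinset, ← prod_mul_prod_compl A,
    prod_eq_one fun j hj => by simp [hj], one_mul, prod_eq_pow_card]
  intro j hj
  rw [if_neg (mem_compl.1 hj), card_univ]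

lemma sum_shiftsExtending_prod {S : Type*} [CommSemiring S] (A : Finset ι) (τ : ι → G)
    (h : ι → G → S) :
    ∑ σ ∈ shiftsExtending A τ, ∏ j, h j (σ j) =
      (∏ j ∈ A, h j (τ j)) * ∏ j ∈ Aᶜ, ∑ x, h j x := by
  rw [shiftsExtending, ← prod_univ_sum, ← prod_mul_prod_compl A]
  congr 1 <;> refine prod_congr rfl fun j hj => ?_
  · simp [hj]
  · rw [if_neg (mem_compl.1 hj)]

end Averaging

section LoadPolynomial

variable {ι G : Type*} [DecidableEq ι]

/-- The factor that user `j` at phase `x` contributes to the load polynomial of user `i`: user `i`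
selects the slots in which it transmits, every other user contributes `X` when it transmits. -/
noncomputable def loadFactor (s : ι → G → ℕ) (i j : ι) (x : G) : ℚ[X] :=
  if j = i then (s i x : ℚ[X]) else X ^ s j x

/-- The load polynomial of user `i` within the group `A` at shifts `τ`: for `i ∈ A` and binary
sequences, the coefficient of `X ^ k` counts the slots in which user `i` and exactly `k` other users
of `A` transmit. -/
noncomputable def loadPoly [Fintype G] [Add G] (s : ι → G → ℕ) (A : Finset ι) (i : ι) (τ : ι → G) :
    ℚ[X] :=
  ∑ t, ∏ j ∈ A, loadFactor s i j (t + τ j)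

lemma prod_loadFactor (s : ι → G → ℕ) {A : Finset ι} {i : ι} (hi : i ∈ A) (x : ι → G) :
    ∏ j ∈ A, loadFactor s i j (x j) = (s i (x i) : ℚ[X]) * ∏ j ∈ A.erase i, X ^ s j (x j) := by
  rw [← mul_prod_erase A _ hi, loadFactor, if_pos rfl]
  congr 1
  exact prod_congr rfl fun j hj => if_neg (ne_of_mem_erase hj)

lemma sum_shiftsExtending_loadPoly [Fintype ι] [Fintype G] [AddGroup G] (s : ι → G → ℕ)
    {A : Finset ι} {i : ι} (hi : i ∈ A) (τ : ι → G) :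
    ∑ σ ∈ shiftsExtending A τ, loadPoly s univ i σ =
      loadPoly s A i τ * ∏ j ∈ Aᶜ, ∑ x, X ^ s j x := by
  simp only [loadPoly]
  rw [sum_comm, sum_mul]
  refine sum_congr rfl fun t _ => ?_
  rw [sum_shiftsExtending_prod A τ fun j x => loadFactor s i j (t + x)]
  congr 1
  refine prod_congr rfl fun j hj => ?_
  have hji : j ≠ i := fun h => mem_compl.1 hj (h ▸ hi)
  simp only [loadFactor, if_neg hji]
  exact Equiv.sum_comp (Equiv.addLeft t) fun x => (X : ℚ[X]) ^ s j x

end LoadPolynomial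

lemma pow_eq_one_add_cast_mul_sub_one {S : Type*} [Ring S] {n : ℕ} (hn : n = 0 ∨ n = 1) (x : S) :
    x ^ n = 1 + n * (x - 1) := by
  rcases hn with rfl | rfl <;> simp

lemma sum_X_pow_eq_one_add_duty {L : ℕ} [NeZero L] {s : ZMod L → ℕ}
    (hbin : ∀ t, s t = 0 ∨ s t = 1) :
    ∑ t, (X : ℚ[X]) ^ s t = C (L : ℚ) * (1 + C (duty s) * (X - 1)) := by
  have hL : (L : ℚ) * duty s = ∑ t, (s t : ℚ) :=
    mul_div_cancel₀ _ (Nat.cast_ne_zero.2 (NeZero.ne L))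
  simp_rw [pow_eq_one_add_cast_mul_sub_one (hbin _)]
  rw [mul_add, ← mul_assoc, ← C_mul, hL, sum_add_distrib, ← sum_mul]
  simp [ZMod.card]

section ProtocolSequences

variable {K L : ℕ} [NeZero L] {s : Fin K → ZMod L → ℕ}

lemma loadPoly_eq_sum_Hcorr (hbin : ∀ i t, s i t = 0 ∨ s i t = 1) {A : Finset (Fin K)} {i : Fin K}
    (hi : i ∈ A) (τ : Fin K → ZMod L) :
    loadPoly s A i τ =
      ∑ T ∈ (A.erase i).powerset, (Hcorr s (insert i T) τ : ℚ) • (X - 1) ^ #T := by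
  have hslot (t : ZMod L) : ∏ j ∈ A, loadFactor s i j (t + τ j) =
      ∑ T ∈ (A.erase i).powerset,
        ((∏ j ∈ insert i T, s j (t + τ j) : ℕ) : ℚ[X]) * (X - 1) ^ #T := by
    simp_rw [prod_loadFactor s hi fun j => t + τ j, pow_eq_one_add_cast_mul_sub_one (hbin _ _),
      prod_one_add, mul_sum, prod_mul_distrib, prod_const]
    refine sum_congr rfl fun T hT => ?_
    have hiT : i ∉ T := fun h => notMem_erase i A (mem_powerset.1 hT h)
    rw [prod_insert hiT]
    push_cast
    ring
  simp_rw [loadPoly, hslot]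
  rw [sum_comm]
  refine sum_congr rfl fun T _ => ?_
  rw [← sum_mul, Hcorr, smul_eq_C_mul]
  simp

lemma loadPoly_sub_loadPoly (hbin : ∀ i t, s i t = 0 ∨ s i t = 1) {A : Finset (Fin K)} {i : Fin K}
    (hi : i ∈ A) {τ τ' : Fin K → ZMod L}
    (hcorr : ∀ T ⊂ A, i ∈ T → Hcorr s T τ = Hcorr s T τ') :
    loadPoly s A i τ' - loadPoly s A i τ =
      ((Hcorr s A τ' : ℚ) - Hcorr s A τ) • (X - 1) ^ (#A - 1) := by
  simp_rw [loadPoly_eq_sum_Hcorr hbin hi, ← sum_sub_distrib, ← sub_smul]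
  rw [sum_eq_single_of_mem (A.erase i) (mem_powerset_self _), insert_erase hi,
    card_erase_of_mem hi]
  intro T hT hne
  have hiT : i ∉ T := fun h => notMem_erase i A (mem_powerset.1 hT h)
  have hproper : insert i T ⊂ A := by
    refine (insert_subset hi ((mem_powerset.1 hT).trans (erase_subset i A))).ssubset_of_ne ?_
    rintro rfl
    exact hne (erase_insert hiT).symm
  rw [hcorr _ hproper (mem_insert_self i T), sub_self, zero_smul]

lemma Rcount_eq_coeffSum_loadPoly (hbin : ∀ i t, s i t = 0 ∨ s i t = 1) {γ : ℕ} (hγ : 1 ≤ γ)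
    (i : Fin K) (τ : Fin K → ZMod L) :
    (Rcount s γ i τ : ℚ) = coeffSum ℚ γ (loadPoly s univ i τ) := by
  rw [Rcount, card_filter, Nat.cast_sum, loadPoly, map_sum]
  refine sum_congr rfl fun t _ => ?_
  rw [prod_loadFactor s (mem_univ i) fun j => t + τ j, prod_pow_eq_pow_sum, ← C_eq_natCast,
    coeffSum_C_mul_X_pow]
  simp only [← Nat.le_sub_one_iff_lt hγ]
  rcases hbin i (t + τ i) with h | h <;> simp [h]

lemma sum_Rcount_shiftsExtending (hbin : ∀ i t, s i t = 0 ∨ s i t = 1) {γ : ℕ} (hγ : 1 ≤ γ)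
    {A : Finset (Fin K)} {i : Fin K} (hi : i ∈ A) (τ : Fin K → ZMod L) :
    ∑ σ ∈ shiftsExtending A τ, (Rcount s γ i σ : ℚ) =
      L ^ #Aᶜ * coeffSum ℚ γ (loadPoly s A i τ * ∏ j ∈ Aᶜ, (1 + C (duty (s j)) * (X - 1))) := by
  simp_rw [Rcount_eq_coeffSum_loadPoly hbin hγ, ← map_sum, sum_shiftsExtending_loadPoly s hi,
    sum_X_pow_eq_one_add_duty (hbin _), prod_mul_distrib, prod_const, ← C_pow]
  rw [mul_left_comm, ← smul_eq_C_mul, map_smul, smul_eq_mul]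

lemma thetaZ_card_eq_Hcorr (hbin : ∀ i t, s i t = 0 ∨ s i t = 1) (A : Finset (Fin K))
    (τ : Fin K → ZMod L) : thetaZ s A #A τ = Hcorr s A τ := by
  rw [thetaZ, Hcorr, card_filter]
  refine sum_congr rfl fun t _ => ?_
  simp only [Nat.cast_inj, card_filter_eq_iff]
  split_ifs with h
  · exact (prod_eq_one h).symm
  · push Not at h
    obtain ⟨j, hj, hne⟩ := h
    exact (prod_eq_zero hj ((hbin j _).resolve_right hne)).symm

lemma Hcorr_eq_of_card_lt {M : ℕ} (hMK : M ≤ K)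
    (hsub : ∀ T : Finset (Fin K), #T = M - 1 → ∀ A ⊆ T, A.Nonempty →
      ∀ τ τ' : Fin K → ZMod L, Hcorr s A τ = Hcorr s A τ')
    {A : Finset (Fin K)} (hA : A.Nonempty) (hAM : #A < M) (τ τ' : Fin K → ZMod L) :
    Hcorr s A τ = Hcorr s A τ' := by
  obtain ⟨T, hAT, hT⟩ := exists_superset_card_eq (s := A) (n := M - 1) (by omega)
    (by rw [Fintype.card_fin]; omega)
  exact hsub T hT A hAT hA τ τ'

theorem stmt13_general (hbin : ∀ i t, s i t = 0 ∨ s i t = 1) {γ : ℕ} (hγ : 1 ≤ γ)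
    {A : Finset (Fin K)} {i : Fin K} (hi : i ∈ A)
    (hthroughput : ∀ τ τ' : Fin K → ZMod L, R s γ i τ = R s γ i τ') {τ τ' : Fin K → ZMod L}
    (hcorr : ∀ T ⊂ A, i ∈ T → Hcorr s T τ = Hcorr s T τ') :
    ((thetaZ s A #A τ' : ℚ) - thetaZ s A #A τ) *
      coeffSum ℚ γ ((X - 1) ^ (#A - 1) * ∏ j ∈ Aᶜ, (1 + C (duty (s j)) * (X - 1))) = 0 := by
  have hL : (L : ℚ) ≠ 0 := Nat.cast_ne_zero.2 (NeZero.ne L)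
  have hcount (σ : Fin K → ZMod L) : (Rcount s γ i σ : ℚ) = Rcount s γ i τ :=
    (div_left_inj' hL).1 (hthroughput σ τ)
  have hsum : ∑ σ ∈ shiftsExtending A τ', (Rcount s γ i σ : ℚ) =
      ∑ σ ∈ shiftsExtending A τ, (Rcount s γ i σ : ℚ) := by
    simp_rw [hcount, sum_const, card_shiftsExtending]
  rw [sum_Rcount_shiftsExtending hbin hγ hi, sum_Rcount_shiftsExtending hbin hγ hi] at hsum
  have hdiff := sub_eq_zero.2 (mul_left_cancel₀ (pow_ne_zero _ hL) hsum)
  rwa [← map_sub, ← sub_mul, loadPoly_sub_loadPoly hbin hi hcorr, smul_mul_assoc, map_smul,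
    smul_eq_mul, ← thetaZ_card_eq_Hcorr hbin, ← thetaZ_card_eq_Hcorr hbin] at hdiff

end ProtocolSequences

end

theorem stmt13 (K L γ M : ℕ) (hK : 3 ≤ K) (hL : 1 ≤ L) [NeZero L]
    (s : Fin K → ZMod L → ℕ) (hbin : ∀ i t, s i t = 0 ∨ s i t = 1)
    (hγ1 : 1 ≤ γ) (hγK : γ < K) (hM2 : 2 ≤ M) (hMK : M < K)
    (hTI : IsTI s γ)
    (hsub : ∀ T : Finset (Fin K), T.card = M - 1 →
      ∀ A ⊆ T, A.Nonempty →
        ∀ τ τ' : Fin K → ZMod L, Hcorr s A τ = Hcorr s A τ')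
    (f : ℚ) (hf : ∀ i, duty (s i) = f) :
    ∀ τ τ' : Fin K → ZMod L,
      (((thetaZ s (Finset.univ.filter (fun j : Fin K => (j : ℕ) < M)) (M : ℤ) τ' : ℤ)
          - (thetaZ s (Finset.univ.filter (fun j : Fin K => (j : ℕ) < M)) (M : ℤ) τ : ℤ) : ℤ) : ℚ) *
        ∑ i ∈ Finset.Icc 1 (M - 1),
          (if i ≤ γ then
              (-1) ^ (M - i) * (Nat.choose (M - 2) (i - 1) : ℚ) *
                (Nat.choose (K - M) (γ - i) : ℚ) *
                f ^ (γ - i) * (1 - f) ^ (K - M - (γ - i))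
            else 0) = 0 := by
  intro τ τ'
  have hcard : #{j : Fin K | (j : ℕ) < M} = M := by
    rw [Fin.card_filter_val_lt, min_eq_right hMK.le]
  obtain ⟨i, hi⟩ : ({j : Fin K | (j : ℕ) < M} : Finset (Fin K)).Nonempty :=
    card_pos.1 (by omega)
  have h := stmt13_general hbin hγ1 hi (hTI i) fun T hT hiT =>
    Hcorr_eq_of_card_lt hMK.le hsub ⟨i, hiT⟩ (hcard ▸ card_lt_card hT) τ τ'
  simp only [hcard, hf, prod_const, card_compl, Fintype.card_fin,
    coeffSum_X_sub_one_pow_mul_pow f hM2 hγ1] at h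
  exact_mod_cast h
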